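/- arXiv:2410.02354 — 2 statements merged into one kernel-verified Lean document; each statement's English description precedes it below -/
import Mathlib

section
/- Commutator of position with the intrinsic boost operator (equation (QNextra) in Proposition 'Lemma2' of the paper). In the Foldy setup, [Q_i, N_j] = iℏ·(ε_{ijk}·Λ·S_k·R − P_i·N_j·ω⁻¹·R) for all i, j. In particular, if some S_k ≠ 0 then Q_i does not commute with every N_j. -/
/-- The Levi-Civita symbol on `Fin 3`, valued in `ℂ`. -/
noncomputable def eps (i j k : Fin 3) : ℂ :=
  ((j.val : ℂ) - (i.val : ℂ)) * ((k.val : ℂ) - (j.val : ℂ)) * ((k.val : ℂ) - (i.val : ℂ)) / 2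

/-- The Kronecker delta on `Fin 3`, valued in `ℂ`. -/
noncomputable def kdelta (i j : Fin 3) : ℂ := if i = j then 1 else 0

/-!
Write `X = S × P`, `D = ω + m`, `w = ω⁻¹` and `c = iℏ`, so that `N j = Λ * X j * D⁻¹`. Bracketing
with `Q i` is a derivation killing `Λ` and `S`, hence it only sees the momenta in `X` and in `D⁻¹`:
`⁅Q i, N j⁆ = c • (Λ * (ε_{ijk} S k - P i * X j * D⁻¹ * w) * D⁻¹)`.

If all these commutators vanish, then `ε_{ijk} S k = P i * Z j` with `Z j = X j * D⁻¹ * w`.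
Multiplying by `P l` on the left gives a tensor `P l * P i * Z j` which is symmetric in `l, i` and
antisymmetric in `i, j`, hence zero. So `P l * S k = 0` for all `l, k`, therefore `P i * X j = 0`,
and finally `S = 0`.
-/

section Commutator

variable {A : Type*} [Ring A]

theorem lie_mul_eq (a b c : A) : ⁅a, b * c⁆ = ⁅a, b⁆ * c + b * ⁅a, c⁆ := by
  simp only [Ring.lie_def]
  noncomm_ring

theorem lie_units_inv (a : A) (u : Aˣ) : ⁅a, (↑u⁻¹ : A)⁆ = -(↑u⁻¹ * ⁅a, (u : A)⁆ * ↑u⁻¹) := by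
  simp only [Ring.lie_def, mul_sub, sub_mul, mul_assoc, Units.mul_inv, mul_one,
    Units.inv_mul_cancel_left, neg_sub]

end Commutator

theorem eq_zero_of_symm_of_antisymm {ι M : Type*} [AddCommGroup M] [IsAddTorsionFree M]
    {T : ι → ι → ι → M} (hsymm : ∀ i j k, T i j k = T j i k)
    (hanti : ∀ i j k, T i j k = -T i k j) (i j k : ι) : T i j k = 0 := by
  refine self_eq_neg.mp ?_
  calc T i j k = -T k i j := by rw [hanti, hsymm]
    _ = T j k i := by rw [hanti, hsymm, neg_neg]
    _ = -T i j k := by rw [hanti, hsymm]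

section LeviCivita

theorem eps_cyclic (i j k : Fin 3) : eps j k i = eps i j k := by
  simp only [eps]
  ring

theorem eps_swap (i j k : Fin 3) : eps j i k = -eps i j k := by
  simp only [eps]
  ring

variable {V : Type*} [AddCommGroup V] [Module ℂ V]

theorem eq_zero_of_sum_eps_smul_eq_zero {v : Fin 3 → V} (h : ∀ i j, ∑ k, eps i j k • v k = 0) :
    v = 0 := by
  funext k
  have hk := h (k + 1) (k + 2)
  fin_cases k <;> simpa [Fin.sum_univ_three, eps, sub_eq_zero] using hk

end LeviCivita

section CrossProduct

variable {A : Type*} [Ring A] [Algebra ℂ A]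

/-- The cross product `(S × P)_j = ε_{jab} S_a P_b` of two triples of operators. Mathlib's
`crossProduct` needs commuting entries; here the factors are kept in the order `S`, `P`. -/
noncomputable def operatorCross (S P : Fin 3 → A) (j : Fin 3) : A :=
  ∑ a, ∑ b, eps j a b • (S a * P b)

variable {P S : Fin 3 → A}

theorem commute_operatorCross {x : A} (hS : ∀ i, Commute x (S i)) (hP : ∀ i, Commute x (P i))
    (j : Fin 3) : Commute x (operatorCross S P j) :=
  .sum_right _ _ _ fun a _ => .sum_right _ _ _ fun b _ =>
    ((hS a).mul_right (hP b)).smul_right _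

theorem mul_operatorCross_eq_zero {x : A} (h : ∀ i, x * S i = 0) (j : Fin 3) :
    x * operatorCross S P j = 0 := by
  simp only [operatorCross, Finset.mul_sum, mul_smul_comm, ← mul_assoc, h, zero_mul, smul_zero,
    Finset.sum_const_zero]

theorem lie_operatorCross {q : A} {c : ℂ} {i : Fin 3} (hS : ∀ j, Commute q (S j))
    (hP : ∀ j, ⁅q, P j⁆ = (c * kdelta i j) • (1 : A)) (j : Fin 3) :
    ⁅q, operatorCross S P j⁆ = c • ∑ k, eps i j k • S k := by
  have lie_term (a b : Fin 3) : q * (S a * P b) - S a * P b * q = (c * kdelta i b) • S a := by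
    rw [← Ring.lie_def, lie_mul_eq, (hS a).lie_eq, zero_mul, zero_add, hP, mul_smul_comm, mul_one]
  calc ⁅q, operatorCross S P j⁆ = ∑ a, ∑ b, eps j a b • (c * kdelta i b) • S a := by
        simp only [operatorCross, Ring.lie_def, Finset.mul_sum, Finset.sum_mul, mul_smul_comm,
          smul_mul_assoc, ← Finset.sum_sub_distrib, ← smul_sub, lie_term]
    _ = ∑ a, eps j a i • c • S a := by simp [kdelta]
    _ = c • ∑ k, eps i j k • S k := by
        simp only [eps_cyclic i j, smul_comm _ c, ← Finset.smul_sum]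

theorem eq_zero_of_sum_eps_smul_eq_mul_operatorCross (hPP : ∀ i j, Commute (P i) (P j)) {y : A}
    (h : ∀ i j, ∑ k, eps i j k • S k = P i * operatorCross S P j * y) : S = 0 := by
  have : IsAddTorsionFree A := .of_isTorsionFree ℂ A
  have hT (l i j : Fin 3) : P l * ∑ k, eps i j k • S k = 0 := by
    refine eq_zero_of_symm_of_antisymm (T := fun l i j => P l * ∑ k, eps i j k • S k)
      (fun l i j => ?_) (fun l i j => ?_) l i j
    · simp only [h, ← mul_assoc, (hPP l i).eq]
    · simp only [eps_swap j i, neg_smul, Finset.sum_neg_distrib, mul_neg]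
  have hPS (l : Fin 3) : (fun k => P l * S k) = 0 :=
    eq_zero_of_sum_eps_smul_eq_zero fun i j => by
      simpa only [Finset.mul_sum, mul_smul_comm] using hT l i j
  refine eq_zero_of_sum_eps_smul_eq_zero fun i j => ?_
  rw [h, mul_operatorCross_eq_zero (congrFun (hPS i)), zero_mul]

theorem lie_mul_operatorCross_mul_inv {q p w Λ : A} {c : ℂ} {i : Fin 3} {D : Aˣ}
    (hΛ : Commute q Λ) (hqS : ∀ j, Commute q (S j))
    (hqP : ∀ j, ⁅q, P j⁆ = (c * kdelta i j) • (1 : A)) (hqD : ⁅q, (D : A)⁆ = c • (p * w))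
    (hpS : ∀ j, Commute p (S j)) (hpP : ∀ j, Commute p (P j)) (hpD : Commute p D) (j : Fin 3) :
    ⁅q, Λ * operatorCross S P j * ↑D⁻¹⁆ =
      c • (Λ * ((∑ k, eps i j k • S k) - p * operatorCross S P j * ↑D⁻¹ * w) * ↑D⁻¹) := by
  have hX : operatorCross S P j * (↑D⁻¹ * p) = p * operatorCross S P j * ↑D⁻¹ := by
    rw [← hpD.units_inv_right.eq, ← mul_assoc, (commute_operatorCross hpS hpP j).eq]
  calc ⁅q, Λ * operatorCross S P j * ↑D⁻¹⁆
      = Λ * ⁅q, operatorCross S P j⁆ * ↑D⁻¹ + Λ * operatorCross S P j * ⁅q, (↑D⁻¹ : A)⁆ := by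
        rw [lie_mul_eq, lie_mul_eq, hΛ.lie_eq, zero_mul, zero_add]
    _ = c • (Λ * ((∑ k, eps i j k • S k) - operatorCross S P j * (↑D⁻¹ * p) * w) * ↑D⁻¹) := by
        rw [lie_operatorCross hqS hqP, lie_units_inv, hqD]
        simp only [mul_smul_comm, smul_mul_assoc, mul_neg, mul_sub, sub_mul, smul_sub, mul_assoc,
          ← sub_eq_add_neg]
    _ = _ := by rw [hX]

end CrossProduct

theorem position_intrinsic_boost_commutator_general
    {A : Type*} [Ring A] [Algebra ℂ A] {c : ℂ} (hc : c ≠ 0)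
    {Q P S N : Fin 3 → A} {w : A} {Λ D : Aˣ}
    (hPP : ∀ i j, ⁅P i, P j⁆ = 0)
    (hQP : ∀ i j, ⁅Q i, P j⁆ = (c * kdelta i j) • (1 : A))
    (hQS : ∀ i j, ⁅Q i, S j⁆ = 0)
    (hPS : ∀ i j, ⁅P i, S j⁆ = 0)
    (hΛQ : ∀ i, ⁅(Λ : A), Q i⁆ = 0)
    (hΛP : ∀ i, ⁅(Λ : A), P i⁆ = 0)
    (hDP : ∀ i, ⁅(D : A), P i⁆ = 0)
    (hQD : ∀ i, ⁅Q i, (D : A)⁆ = c • (P i * w))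
    (hN : ∀ i, N i = Λ * (∑ j, ∑ k, eps i j k • (S j * P k)) * ↑D⁻¹) :
    (∀ i j, ⁅Q i, N j⁆ = c •
        ((∑ k, eps i j k • (Λ * S k * ↑D⁻¹)) - P i * N j * w * ↑D⁻¹)) ∧
      ((∃ k, S k ≠ 0) → ¬ ∀ i j, ⁅Q i, N j⁆ = 0) := by
  simp only [← commute_iff_lie_eq] at hPP hQS hPS hΛQ hΛP hDP
  have lie_N (i j : Fin 3) : ⁅Q i, N j⁆ =
      c • (Λ * ((∑ k, eps i j k • S k) - P i * operatorCross S P j * ↑D⁻¹ * w) * ↑D⁻¹) :=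
    hN j ▸ lie_mul_operatorCross_mul_inv (hΛQ i).symm (hQS i) (hQP i) (hQD i) (hPS i) (hPP i)
      (hDP i).symm j
  constructor
  · intro i j
    have hPN : P i * N j = Λ * (P i * operatorCross S P j * ↑D⁻¹) := by
      simp only [hN, operatorCross, ← mul_assoc, (hΛP i).eq]
    simp only [lie_N, hPN, mul_sub, sub_mul, Finset.mul_sum, Finset.sum_mul, mul_smul_comm,
      smul_mul_assoc, mul_assoc]
  · rintro ⟨k, hk⟩ hQN
    refine hk (congrFun (eq_zero_of_sum_eps_smul_eq_mul_operatorCross hPP (y := ↑D⁻¹ * w)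
      fun i j => ?_) k)
    have hzero := (smul_eq_zero_iff_right hc).mp ((lie_N i j).symm.trans (hQN i j))
    rw [Units.mul_left_eq_zero, Units.mul_right_eq_zero, sub_eq_zero] at hzero
    rw [hzero, mul_assoc _ _ w]

/-- Commutator of position with the intrinsic boost operator
(equation (QNextra)). In the Foldy setup,
`[Q i, N j] = iℏ • (ε_{ijk} Λ S k R - P i N j ω⁻¹ R)`; in particular, if
some `S k ≠ 0` then it is not the case that every `Q i` commutes with
every `N j`. -/
theorem position_intrinsic_boost_commutator
    {A : Type*} [Ring A] [Algebra ℂ A] (ℏ : ℝ) (hℏ : ℏ ≠ 0)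
    (m t : ℝ) (hm : 0 < m)
    (Q P S : Fin 3 → A) (ω ωinv Λ R : A)
    (hQQ : ∀ i j, ⁅Q i, Q j⁆ = 0)
    (hPP : ∀ i j, ⁅P i, P j⁆ = 0)
    (hQP : ∀ i j, ⁅Q i, P j⁆ = (Complex.I * (ℏ : ℂ) * kdelta i j) • (1 : A))
    (hSS : ∀ i j, ⁅S i, S j⁆ = (Complex.I * (ℏ : ℂ)) • ∑ k, eps i j k • S k)
    (hQS : ∀ i j, ⁅Q i, S j⁆ = 0)
    (hPS : ∀ i j, ⁅P i, S j⁆ = 0)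
    (hΛΛ : Λ * Λ = 1)
    (hΛQ : ∀ i, ⁅Λ, Q i⁆ = 0)
    (hΛP : ∀ i, ⁅Λ, P i⁆ = 0)
    (hΛS : ∀ i, ⁅Λ, S i⁆ = 0)
    (hΛω : ⁅Λ, ω⁆ = 0)
    (hωinv1 : ω * ωinv = 1) (hωinv2 : ωinv * ω = 1)
    (hωP : ∀ i, ⁅ω, P i⁆ = 0)
    (hωS : ∀ i, ⁅ω, S i⁆ = 0)
    (hω2 : ω * ω = P 0 * P 0 + P 1 * P 1 + P 2 * P 2 + ((m : ℂ) ^ 2) • (1 : A))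
    (hQω : ∀ i, ⁅Q i, ω⁆ = (Complex.I * (ℏ : ℂ)) • (P i * ωinv))
    (hR1 : (ω + (m : ℂ) • (1 : A)) * R = 1)
    (hR2 : R * (ω + (m : ℂ) • (1 : A)) = 1)
    (H : A) (L J N M K : Fin 3 → A)
    (hH : H = Λ * ω)
    (hL : ∀ i, L i = ∑ j, ∑ k, eps i j k • (Q j * P k))
    (hJ : ∀ i, J i = L i + S i)
    (hN : ∀ i, N i = Λ * (∑ j, ∑ k, eps i j k • (S j * P k)) * R)
    (hM : ∀ i, M i = (t : ℂ) • P i - (2 : ℂ)⁻¹ • (Q i * H + H * Q i))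
    (hK : ∀ i, K i = M i + N i)
    :
    (∀ i j, ⁅Q i, N j⁆ = (Complex.I * (ℏ : ℂ)) •
        ((∑ k, eps i j k • (Λ * S k * R)) - P i * N j * ωinv * R)) ∧
      ((∃ k, S k ≠ 0) → ¬ ∀ i j, ⁅Q i, N j⁆ = 0) :=
  position_intrinsic_boost_commutator_general (Λ := ⟨Λ, Λ, hΛΛ, hΛΛ⟩)
    (D := ⟨ω + (m : ℂ) • (1 : A), R, hR1, hR2⟩)
    (mul_ne_zero Complex.I_ne_zero (Complex.ofReal_ne_zero.mpr hℏ)) hPP hQP hQS hPS hΛQ hΛP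
    (fun i => by simpa [Ring.lie_def, add_mul, mul_add] using hωP i)
    (fun i => by simpa [Ring.lie_def, add_mul, mul_add] using hQω i) hN
end

section
/- Foldy verification that the boost generators transform as a vector under rotations (part of the direction (ii) ⇒ (i) of the paper's main theorem, following Foldy 1956). In the Foldy setup, [J_i, K_j] = iℏ·ε_{ijk}K_k for all i, j. -/
theorem eps_swap_right (i j k : Fin 3) : eps i k j = -eps i j k := by
  simp only [eps]; ring

theorem kdelta_comm (i j : Fin 3) : kdelta i j = kdelta j i := by
  simp only [kdelta, eq_comm]

theorem sum_eps_mul_eps (i j a b : Fin 3) :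
    ∑ k, eps i j k * eps a b k = kdelta i a * kdelta j b - kdelta i b * kdelta j a := by
  fin_cases i <;> fin_cases j <;> fin_cases a <;> fin_cases b <;>
    norm_num [eps, kdelta, Fin.sum_univ_three]

theorem eps_jacobi (i j a b : Fin 3) :
    ∑ k, eps j k b * eps i k a + ∑ k, eps j a k * eps i k b = ∑ k, eps i j k * eps k a b := by
  simp only [eps_cyclic b j, eps_cyclic a i, eps_cyclic b i, ← eps_cyclic _ a b, sum_eps_mul_eps]
  rw [kdelta_comm b a, kdelta_comm b i, kdelta_comm j a, kdelta_comm j i, kdelta_comm a i]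
  ring

theorem ring_lie_mul {A : Type*} [Ring A] (a b c : A) : ⁅a, b * c⁆ = ⁅a, b⁆ * c + b * ⁅a, c⁆ := by
  simp only [Ring.lie_def]; noncomm_ring

theorem ring_mul_lie {A : Type*} [Ring A] (a b c : A) : ⁅a * b, c⁆ = a * ⁅b, c⁆ + ⁅a, c⁆ * b := by
  simp only [Ring.lie_def]; noncomm_ring

theorem commute_inverse_right {M : Type*} [Monoid M] {a u v : M} (h : Commute a u)
    (huv : u * v = 1) (hvu : v * u = 1) : Commute a v :=
  h.units_inv_right (u := ⟨u, v, huv, hvu⟩)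

section Vectors

-- Mathlib's Lie algebra lemmas need the first instance; the second, declared later and hence
-- preferred, keeps the ring commutator as the meaning of `⁅a, b⁆` in statements.
attribute [local instance] LieRing.ofAssociativeRing
attribute [local instance] Ring.instBracket

variable {A : Type*} [Ring A] [Algebra ℂ A] {c : ℂ} {J L S V W Q P : Fin 3 → A} {x ν : A}

/-- The cross product `V × W` of two triples of elements of `A`; as `A` need not be commutative,
the factor from `V` is always written on the left. -/
noncomputable def cross (V W : Fin 3 → A) (i : Fin 3) : A :=
  ∑ j, ∑ k, eps i j k • (V j * W k)

theorem lie_cross (x : A) (V W : Fin 3 → A) (i : Fin 3) :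
    ⁅x, cross V W i⁆ = ∑ j, ∑ k, eps i j k • (⁅x, V j⁆ * W k + V j * ⁅x, W k⁆) := by
  simp only [cross, lie_sum, lie_smul, ring_lie_mul]

theorem cross_lie (V W : Fin 3 → A) (x : A) (i : Fin 3) :
    ⁅cross V W i, x⁆ = ∑ j, ∑ k, eps i j k • (V j * ⁅W k, x⁆ + ⁅V j, x⁆ * W k) := by
  simp only [cross, sum_lie, smul_lie, ring_mul_lie]

theorem cross_self_eq_zero (hV : ∀ i j, Commute (V i) (V j)) (i : Fin 3) : cross V V i = 0 := by
  have : IsAddTorsionFree A := .of_isTorsionFree ℂ A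
  rw [← self_eq_neg]
  calc cross V V i = ∑ k, ∑ j, eps i j k • (V j * V k) := Finset.sum_comm
    _ = -cross V V i := by
      simp only [cross, ← Finset.sum_neg_distrib, ← neg_smul, ← eps_swap_right, (hV _ _).eq]

theorem commute_cross_left (hV : ∀ i, Commute (V i) x) (hW : ∀ i, Commute (W i) x) (i : Fin 3) :
    Commute (cross V W i) x :=
  .sum_left _ _ _ fun j _ => .sum_left _ _ _ fun k _ => ((hV j).mul_left (hW k)).smul_left _

theorem commute_cross_of_lie_eq_smul_mul (hPP : ∀ i j, Commute (P i) (P j))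
    (hPx : ∀ i, Commute (P i) x) (hPν : ∀ i, Commute (P i) ν)
    (hQx : ∀ i, ⁅Q i, x⁆ = c • (P i * ν)) (i : Fin 3) : Commute (cross Q P i) x := by
  rw [commute_iff_lie_eq]
  calc ⁅cross Q P i, x⁆ = ∑ j, ∑ k, eps i j k • (c • (P j * P k * ν)) := by
        simp only [cross_lie, (hPx _).lie_eq, hQx, mul_zero, zero_add, smul_mul_assoc,
          (hPν _).symm.right_comm]
    _ = c • (cross P P i * ν) := by
        simp only [cross, Finset.sum_mul, Finset.smul_sum, smul_mul_assoc, smul_comm c]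
    _ = 0 := by rw [cross_self_eq_zero hPP, zero_mul, smul_zero]

/-- `V` transforms as a vector under the rotations generated by `J`; the scalar `c` plays the role
of `iℏ`. Rotation invariance of an element `x` is expressed by `∀ i, Commute (J i) x`. -/
def IsRotationVector (c : ℂ) (J V : Fin 3 → A) : Prop :=
  ∀ i j, ⁅J i, V j⁆ = c • ∑ k, eps i j k • V k

namespace IsRotationVector

theorem add (hV : IsRotationVector c J V) (hW : IsRotationVector c J W) :
    IsRotationVector c J (fun i => V i + W i) := fun i j => by
  simp only [lie_add, hV i j, hW i j, smul_add, Finset.sum_add_distrib]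

theorem smul (hV : IsRotationVector c J V) (r : ℂ) :
    IsRotationVector c J (fun i => r • V i) := fun i j => by
  simp only [lie_smul, hV i j, Finset.smul_sum, smul_comm r]

theorem sub (hV : IsRotationVector c J V) (hW : IsRotationVector c J W) :
    IsRotationVector c J (fun i => V i - W i) := fun i j => by
  simp only [lie_sub, hV i j, hW i j, smul_sub, Finset.sum_sub_distrib]

theorem mul_right (hV : IsRotationVector c J V) (hx : ∀ i, Commute (J i) x) :
    IsRotationVector c J (fun i => V i * x) := fun i j => by
  simp only [ring_lie_mul, (hx i).lie_eq, hV i j, mul_zero, add_zero, smul_mul_assoc,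
    Finset.sum_mul]

theorem mul_left (hV : IsRotationVector c J V) (hx : ∀ i, Commute (J i) x) :
    IsRotationVector c J (fun i => x * V i) := fun i j => by
  simp only [ring_lie_mul, (hx i).lie_eq, hV i j, zero_mul, zero_add, mul_smul_comm,
    Finset.mul_sum]

protected theorem cross (hV : IsRotationVector c J V) (hW : IsRotationVector c J W) :
    IsRotationVector c J (cross V W) := fun i j => by
  calc ⁅J i, cross V W j⁆
    _ = c • (∑ k, ∑ b, ∑ a, (eps j k b * eps i k a) • (V a * W b) +
          ∑ a, ∑ k, ∑ b, (eps j a k * eps i k b) • (V a * W b)) := by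
      simp only [lie_cross, hV i _, hW i _, smul_add, Finset.sum_add_distrib, Finset.smul_sum,
        Finset.sum_mul, Finset.mul_sum, smul_mul_assoc, mul_smul_comm, smul_smul, mul_left_comm c]
    _ = c • ∑ a, ∑ b, (∑ k, eps j k b * eps i k a + ∑ k, eps j a k * eps i k b) • (V a * W b) := by
      simp only [add_smul, Finset.sum_smul, Finset.sum_add_distrib]
      congr 2
      · exact Finset.sum_comm_cycle.trans (Finset.sum_congr rfl fun a _ => Finset.sum_comm)
      · exact Finset.sum_congr rfl fun a _ => Finset.sum_comm
    _ = c • ∑ k, eps i j k • cross V W k := by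
      simp only [eps_jacobi, cross, Finset.sum_smul, Finset.smul_sum, smul_smul]
      rw [Finset.sum_comm_cycle]

theorem add_generator_right (hV : IsRotationVector c L V) (hSV : ∀ i j, Commute (S i) (V j)) :
    IsRotationVector c (fun i => L i + S i) V := fun i j => by
  rw [add_lie, hV i j, (hSV i j).lie_eq, add_zero]

theorem add_generator_left (hV : IsRotationVector c S V) (hLV : ∀ i j, Commute (L i) (V j)) :
    IsRotationVector c (fun i => L i + S i) V := fun i j => by
  rw [add_lie, hV i j, (hLV i j).lie_eq, zero_add]

end IsRotationVector

theorem isRotationVector_cross_position (hQQ : ∀ i j, Commute (Q i) (Q j))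
    (hQP : ∀ i j, ⁅Q i, P j⁆ = (c * kdelta i j) • (1 : A)) :
    IsRotationVector c (cross Q P) Q := fun i j => by
  have hPQ (k) : ⁅P k, Q j⁆ = -((c * kdelta j k) • (1 : A)) := by rw [← hQP, lie_skew]
  simp [cross_lie, (hQQ _ _).lie_eq, hPQ, kdelta, Finset.smul_sum, smul_smul, eps_swap_right i j,
    mul_comm c]

theorem isRotationVector_cross_momentum (hPP : ∀ i j, Commute (P i) (P j))
    (hQP : ∀ i j, ⁅Q i, P j⁆ = (c * kdelta i j) • (1 : A)) :
    IsRotationVector c (cross Q P) P := fun i j => by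
  simp [cross_lie, (hPP _ _).lie_eq, hQP, kdelta, Finset.smul_sum, smul_smul, mul_comm c]

end Vectors

/-- Here `ω` obeys an arbitrary dispersion law, with velocity `P ν`, in place of the relativistic
one, for which `ν = ω⁻¹`. -/
theorem foldy_boost_vector_under_rotations_general
    {A : Type*} [Ring A] [Algebra ℂ A] (c m t : ℂ) (Q P S : Fin 3 → A) (ω ν Λ R : A)
    (hQQ : ∀ i j, ⁅Q i, Q j⁆ = 0)
    (hPP : ∀ i j, ⁅P i, P j⁆ = 0)
    (hQP : ∀ i j, ⁅Q i, P j⁆ = (c * kdelta i j) • (1 : A))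
    (hSS : ∀ i j, ⁅S i, S j⁆ = c • ∑ k, eps i j k • S k)
    (hQS : ∀ i j, ⁅Q i, S j⁆ = 0)
    (hPS : ∀ i j, ⁅P i, S j⁆ = 0)
    (hΛQ : ∀ i, ⁅Λ, Q i⁆ = 0)
    (hΛP : ∀ i, ⁅Λ, P i⁆ = 0)
    (hΛS : ∀ i, ⁅Λ, S i⁆ = 0)
    (hωP : ∀ i, ⁅ω, P i⁆ = 0)
    (hωS : ∀ i, ⁅ω, S i⁆ = 0)
    (hPν : ∀ i, ⁅P i, ν⁆ = 0)
    (hQω : ∀ i, ⁅Q i, ω⁆ = c • (P i * ν))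
    (hR1 : (ω + m • (1 : A)) * R = 1)
    (hR2 : R * (ω + m • (1 : A)) = 1) :
    IsRotationVector c (fun i => cross Q P i + S i) (fun i =>
      t • P i - (2 : ℂ)⁻¹ • (Q i * (Λ * ω) + Λ * ω * Q i) + Λ * cross S P i * R) := by
  simp only [← commute_iff_lie_eq] at hQQ hPP hQS hPS hΛQ hΛP hΛS hωP hωS hPν
  have vQ := (isRotationVector_cross_position hQQ hQP).add_generator_right
    fun i j => (hQS j i).symm
  have vP := (isRotationVector_cross_momentum hPP hQP).add_generator_right
    fun i j => (hPS j i).symm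
  have vS := IsRotationVector.add_generator_left hSS
    fun i j => commute_cross_left (hQS · j) (hPS · j) i
  have sΛ (i) : Commute (cross Q P i + S i) Λ :=
    (commute_cross_left (fun j => (hΛQ j).symm) (fun j => (hΛP j).symm) i).add_left (hΛS i).symm
  have sω (i) : Commute (cross Q P i + S i) ω :=
    (commute_cross_of_lie_eq_smul_mul hPP (fun j => (hωP j).symm) hPν hQω i).add_left (hωS i).symm
  have sR (i) : Commute (cross Q P i + S i) R :=
    commute_inverse_right ((sω i).add_right ((Commute.one_right _).smul_right m)) hR1 hR2
  have sH (i) : Commute (cross Q P i + S i) (Λ * ω) := (sΛ i).mul_right (sω i)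
  exact ((vP.smul t).sub (((vQ.mul_right sH).add (vQ.mul_left sH)).smul _)).add
    (((vS.cross vP).mul_left sΛ).mul_right sR)

/-- Foldy verification that the boost generators transform as
a vector under rotations. In the Foldy setup, `[J i, K j] = iℏ ε_{ijk} • K k`. -/
theorem foldy_boost_vector_under_rotations
    {A : Type*} [Ring A] [Algebra ℂ A] (ℏ : ℝ) (hℏ : ℏ ≠ 0)
    (m t : ℝ) (hm : 0 < m)
    (Q P S : Fin 3 → A) (ω ωinv Λ R : A)
    (hQQ : ∀ i j, ⁅Q i, Q j⁆ = 0)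
    (hPP : ∀ i j, ⁅P i, P j⁆ = 0)
    (hQP : ∀ i j, ⁅Q i, P j⁆ = (Complex.I * (ℏ : ℂ) * kdelta i j) • (1 : A))
    (hSS : ∀ i j, ⁅S i, S j⁆ = (Complex.I * (ℏ : ℂ)) • ∑ k, eps i j k • S k)
    (hQS : ∀ i j, ⁅Q i, S j⁆ = 0)
    (hPS : ∀ i j, ⁅P i, S j⁆ = 0)
    (hΛΛ : Λ * Λ = 1)
    (hΛQ : ∀ i, ⁅Λ, Q i⁆ = 0)
    (hΛP : ∀ i, ⁅Λ, P i⁆ = 0)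
    (hΛS : ∀ i, ⁅Λ, S i⁆ = 0)
    (hΛω : ⁅Λ, ω⁆ = 0)
    (hωinv1 : ω * ωinv = 1) (hωinv2 : ωinv * ω = 1)
    (hωP : ∀ i, ⁅ω, P i⁆ = 0)
    (hωS : ∀ i, ⁅ω, S i⁆ = 0)
    (hω2 : ω * ω = P 0 * P 0 + P 1 * P 1 + P 2 * P 2 + ((m : ℂ) ^ 2) • (1 : A))
    (hQω : ∀ i, ⁅Q i, ω⁆ = (Complex.I * (ℏ : ℂ)) • (P i * ωinv))
    (hR1 : (ω + (m : ℂ) • (1 : A)) * R = 1)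
    (hR2 : R * (ω + (m : ℂ) • (1 : A)) = 1)
    (H : A) (L J N M K : Fin 3 → A)
    (hH : H = Λ * ω)
    (hL : ∀ i, L i = ∑ j, ∑ k, eps i j k • (Q j * P k))
    (hJ : ∀ i, J i = L i + S i)
    (hN : ∀ i, N i = Λ * (∑ j, ∑ k, eps i j k • (S j * P k)) * R)
    (hM : ∀ i, M i = (t : ℂ) • P i - (2 : ℂ)⁻¹ • (Q i * H + H * Q i))
    (hK : ∀ i, K i = M i + N i)
    :
    ∀ i j, ⁅J i, K j⁆ = (Complex.I * (ℏ : ℂ)) • ∑ k, eps i j k • K k := by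
  simp only [hJ, hL, hK, hM, hN, hH]
  exact foldy_boost_vector_under_rotations_general _ m t Q P S ω ωinv Λ R hQQ hPP hQP hSS hQS hPS
    hΛQ hΛP hΛS hωP hωS
    (fun i => (commute_inverse_right (commute_iff_lie_eq.2 (hωP i)).symm hωinv1 hωinv2).lie_eq)
    hQω hR1 hR2
end
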